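/- Theorem 2 (thermodynamic bound for local-hidden-state models). Let d ≥ 1 and let Λ be a finite index set. Let p : Λ → ℝ be a probability distribution (p(λ) ≥ 0 and Σ_λ p(λ) = 1) and for each λ let ρ_λ be a d×d complex matrix that is positive semidefinite with trace 1. Let u, v be two orthonormal bases of EuclideanSpace ℂ (Fin d), and define for each λ the dephasing distributions q_λ(k) = Re ⟪u k, ρ_λ (u k)⟫ and r_λ(ℓ) = Re ⟪v ℓ, ρ_λ (v ℓ)⟫ (with ρ_λ acting via Matrix.toEuclideanLin). Let c = max over k, ℓ of ‖⟪u k, v ℓ⟫‖. Then the average assisted erasure cost of the local-hidden-state model satisfies (1/2)·Σ_λ p(λ)·(H(q_λ) + H(r_λ)) ≥ −log₂ c, where H is the base-2 Shannon entropy. -/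

import Mathlib

open scoped ComplexOrder

/-- Base-2 Shannon entropy of a finitely supported probability vector,
with the convention `0 · log₂ 0 = 0`. -/
noncomputable def shannonEntropy2 {n : ℕ} (q : Fin n → ℝ) : ℝ :=
  ∑ k, Real.negMulLog (q k) / Real.log 2

/-!
This is the Maassen–Uffink uncertainty relation, averaged over the hidden variable. Write
`ρ = B† B` and let `M k l = ⟪u k, v l⟫ ⟪B (v l), B (u k)⟫` be the Kirkwood–Dirac quasiprobability
of `ρ`, whose marginals are the two dephasing distributions `q` and `r`. The entire function
`F z = ∑ k l, (q k * r l) ^ (z / 2) * M k l` has value `1` and derivative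
`-(H(q) + H(r)) / 2` (in nats) at `0`. On `re z = 0` the factors `(q k * r l) ^ (z / 2)` are
products of unimodular weights, so `‖F z‖ ≤ 1` by Cauchy–Schwarz for the Hilbert–Schmidt inner
product; on `re z = 1` one has `‖F z‖ ≤ c` by `‖M k l‖ ≤ c * √(q k) * √(r l)`. The three lines
theorem gives `‖F t‖ ≤ c ^ t` on `[0, 1]`, with equality at `t = 0`, and comparing derivatives there
gives `-(H(q) + H(r)) / 2 ≤ log c`.
-/

open Finset Topology
open scoped InnerProductSpace ComplexConjugate

section ThreeLines

theorem le_of_hasDerivWithinAt_Ioi {f g : ℝ → ℝ} {f' g' x : ℝ}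
    (hf : HasDerivWithinAt f f' (Set.Ioi x) x) (hg : HasDerivWithinAt g g' (Set.Ioi x) x)
    (heq : f x = g x) (hle : ∀ᶠ y in 𝓝[>] x, f y ≤ g y) : f' ≤ g' := by
  rw [hasDerivWithinAt_iff_tendsto_slope' Set.self_notMem_Ioi] at hf hg
  refine le_of_tendsto_of_tendsto hf hg ?_
  filter_upwards [hle, self_mem_nhdsWithin] with y hy hxy
  have hxy : 0 < y - x := sub_pos.2 hxy
  simp only [slope_def_field, heq]
  gcongr

theorem re_deriv_le_log_of_norm_le_on_strip {f : ℂ → ℂ} {f' : ℂ} {c : ℝ} (hc : 0 < c)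
    (hdiff : DiffContOnCl ℂ f (Complex.HadamardThreeLines.verticalStrip 0 1))
    (hbdd : BddAbove ((norm ∘ f) '' Complex.HadamardThreeLines.verticalClosedStrip 0 1))
    (hleft : ∀ z : ℂ, z.re = 0 → ‖f z‖ ≤ 1) (hright : ∀ z : ℂ, z.re = 1 → ‖f z‖ ≤ c)
    (hzero : f 0 = 1) (hderiv : HasDerivAt f f' 0) : f'.re ≤ Real.log c := by
  have hre : HasDerivAt (fun t : ℝ ↦ (f t).re) f'.re 0 :=
    HasDerivAt.real_of_complex (by simpa using hderiv)
  have hpow : HasDerivAt (fun t : ℝ ↦ c ^ t) (Real.log c) 0 := by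
    simpa using (hasDerivAt_id (0 : ℝ)).const_rpow hc
  refine le_of_hasDerivWithinAt_Ioi hre.hasDerivWithinAt hpow.hasDerivWithinAt (by simp [hzero]) ?_
  filter_upwards [Ioc_mem_nhdsGT one_pos] with t ht
  have hinterp := Complex.HadamardThreeLines.norm_le_interp_of_mem_verticalClosedStrip₀₁' f
    (z := t) ⟨by simpa using ht.1.le, by simpa using ht.2⟩ hdiff hbdd hleft hright
  exact (Complex.re_le_norm _).trans (by simpa using hinterp)

end ThreeLines

section ExpSum

variable {ι : Type*} [Fintype ι]

/-- The exponential sum (general Dirichlet polynomial) with coefficients `a` and real frequencies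
`s`, the analytic family to which the three lines theorem is applied. -/
noncomputable def expSum (a : ι → ℂ) (s : ι → ℝ) (z : ℂ) : ℂ :=
  ∑ i, Complex.exp (z * s i) * a i

theorem hasDerivAt_expSum_zero (a : ι → ℂ) (s : ι → ℝ) :
    HasDerivAt (expSum a s) (∑ i, s i * a i) 0 := by
  refine HasDerivAt.fun_sum fun i _ ↦ ?_
  simpa using (((hasDerivAt_id (0 : ℂ)).mul_const (s i : ℂ)).cexp).mul_const (a i)

theorem differentiable_expSum (a : ι → ℂ) (s : ι → ℝ) : Differentiable ℂ (expSum a s) := by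
  unfold expSum
  fun_prop

theorem norm_expSum_le (a : ι → ℂ) (s : ι → ℝ) (z : ℂ) :
    ‖expSum a s z‖ ≤ ∑ i, Real.exp (z.re * s i) * ‖a i‖ := by
  refine (norm_sum_le _ _).trans_eq (sum_congr rfl fun i _ ↦ ?_)
  rw [norm_mul, Complex.norm_exp, Complex.re_mul_ofReal]

theorem bddAbove_norm_expSum_image_verticalClosedStrip (a : ι → ℂ) (s : ι → ℝ) :
    BddAbove ((norm ∘ expSum a s) '' Complex.HadamardThreeLines.verticalClosedStrip 0 1) := by
  refine ⟨∑ i, Real.exp |s i| * ‖a i‖, ?_⟩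
  rintro _ ⟨z, ⟨hz₀, hz₁⟩, rfl⟩
  refine (norm_expSum_le a s z).trans ?_
  gcongr with i
  calc z.re * s i ≤ |z.re| * |s i| := (le_abs_self _).trans_eq (abs_mul _ _)
    _ ≤ 1 * |s i| := by gcongr; rwa [abs_of_nonneg hz₀]
    _ = |s i| := one_mul _

theorem re_sum_mul_le_log_of_norm_expSum_le_one {a : ι → ℂ} {s : ι → ℝ} {c : ℝ}
    (hsum : ∑ i, a i = 1) (himag : ∀ z : ℂ, z.re = 0 → ‖expSum a s z‖ ≤ 1)
    (hc : ∑ i, Real.exp (s i) * ‖a i‖ ≤ c) : (∑ i, s i * a i).re ≤ Real.log c := by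
  have hcpos : 0 < c := by
    obtain ⟨i, -, hi⟩ : ∃ i ∈ univ, a i ≠ 0 := exists_ne_zero_of_sum_ne_zero (by simp [hsum])
    exact (sum_pos' (fun j _ ↦ by positivity) ⟨i, mem_univ i, by positivity⟩).trans_le hc
  refine re_deriv_le_log_of_norm_le_on_strip hcpos (differentiable_expSum a s).diffContOnCl
    (bddAbove_norm_expSum_image_verticalClosedStrip a s) himag (fun z hz ↦ ?_)
    (by simpa [expSum] using hsum) (hasDerivAt_expSum_zero a s)
  exact (norm_expSum_le a s z).trans (by simpa [hz] using hc)

end ExpSum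

section Quasiprobability

variable {ι κ : Type*} [Fintype ι] [Fintype κ]

theorem exp_half_log_mul_sqrt {x : ℝ} (hx : 0 ≤ x) : Real.exp (Real.log x / 2) * √x = x := by
  -- At `x = 0` the exponential is the junk value `exp 0 = 1`, which the factor `√0` removes.
  rcases hx.eq_or_lt with rfl | hpos
  · simp
  · rw [Real.exp_half, Real.exp_log hpos, Real.mul_self_sqrt hx]

theorem sum_half_log_mul_eq {M : ι → κ → ℂ} {q : ι → ℝ} (hrow : ∀ k, ∑ l, M k l = q k) :
    ∑ k, ∑ l, ((Real.log (q k) / 2 : ℝ) : ℂ) * M k l =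
      ((-(∑ k, Real.negMulLog (q k)) / 2 : ℝ) : ℂ) := by
  have hhalf : ∀ k, Real.log (q k) / 2 * q k = -Real.negMulLog (q k) / 2 := fun k ↦ by
    rw [Real.negMulLog]
    ring
  simp only [← mul_sum, hrow, ← Complex.ofReal_mul, hhalf, ← Complex.ofReal_sum, ← sum_div,
    sum_neg_distrib]

theorem sum_half_log_add_half_log_mul_eq {M : ι → κ → ℂ} {q : ι → ℝ} {r : κ → ℝ}
    (hrow : ∀ k, ∑ l, M k l = q k) (hcol : ∀ l, ∑ k, M k l = r l) :
    ∑ x : ι × κ, ((Real.log (q x.1) / 2 + Real.log (r x.2) / 2 : ℝ) : ℂ) * M x.1 x.2 =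
      ((-(∑ k, Real.negMulLog (q k) + ∑ l, Real.negMulLog (r l)) / 2 : ℝ) : ℂ) := by
  simp only [Fintype.sum_prod_type, Complex.ofReal_add, add_mul, sum_add_distrib]
  rw [sum_half_log_mul_eq hrow, sum_comm, sum_half_log_mul_eq hcol]
  push_cast
  ring

theorem sum_exp_half_log_mul_norm_le {M : ι → κ → ℂ} {q : ι → ℝ} {r : κ → ℝ} {c : ℝ}
    (hq : ∀ k, 0 ≤ q k) (hr : ∀ l, 0 ≤ r l) (hqsum : ∑ k, q k = 1) (hrsum : ∑ l, r l = 1)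
    (hM : ∀ k l, ‖M k l‖ ≤ c * (√(q k) * √(r l))) :
    ∑ x : ι × κ, Real.exp (Real.log (q x.1) / 2 + Real.log (r x.2) / 2) * ‖M x.1 x.2‖ ≤ c := by
  calc
    _ ≤ ∑ x : ι × κ, Real.exp (Real.log (q x.1) / 2 + Real.log (r x.2) / 2) *
        (c * (√(q x.1) * √(r x.2))) := by
      gcongr
      exact hM _ _
    _ = ∑ x : ι × κ, c * ((Real.exp (Real.log (q x.1) / 2) * √(q x.1)) *
        (Real.exp (Real.log (r x.2) / 2) * √(r x.2))) := by
      refine sum_congr rfl fun x _ ↦ ?_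
      rw [Real.exp_add]
      ring
    _ = c := by
      simp only [exp_half_log_mul_sqrt (hq _), exp_half_log_mul_sqrt (hr _),
        Fintype.sum_prod_type, ← mul_sum, hrsum, hqsum, mul_one]

theorem neg_two_mul_log_le_sum_negMulLog_of_marginals {M : ι → κ → ℂ} {q : ι → ℝ}
    {r : κ → ℝ} {c : ℝ} (hq : ∀ k, 0 ≤ q k) (hr : ∀ l, 0 ≤ r l)
    (hqsum : ∑ k, q k = 1) (hrow : ∀ k, ∑ l, M k l = q k) (hcol : ∀ l, ∑ k, M k l = r l)
    (hphase : ∀ (w : ι → ℂ) (w' : κ → ℂ), (∀ k, ‖w k‖ = 1) → (∀ l, ‖w' l‖ = 1) →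
      ‖∑ k, ∑ l, w k * w' l * M k l‖ ≤ 1)
    (hM : ∀ k l, ‖M k l‖ ≤ c * (√(q k) * √(r l))) :
    -2 * Real.log c ≤ ∑ k, Real.negMulLog (q k) + ∑ l, Real.negMulLog (r l) := by
  have hMsum : ∑ k, ∑ l, M k l = 1 := by
    simp only [hrow]
    exact_mod_cast hqsum
  have hrsum : ∑ l, r l = 1 := by
    rw [sum_comm] at hMsum
    simp only [hcol] at hMsum
    exact_mod_cast hMsum
  have himag : ∀ z : ℂ, z.re = 0 → ‖expSum (fun x : ι × κ ↦ M x.1 x.2)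
      (fun x ↦ Real.log (q x.1) / 2 + Real.log (r x.2) / 2) z‖ ≤ 1 := by
    intro z hz
    have hunit : ∀ s : ℝ, ‖Complex.exp (z * s)‖ = 1 := by simp [Complex.norm_exp, hz]
    simpa only [expSum, Fintype.sum_prod_type, Complex.ofReal_add, mul_add, Complex.exp_add] using
      hphase (fun k ↦ Complex.exp (z * (Real.log (q k) / 2 : ℝ)))
        (fun l ↦ Complex.exp (z * (Real.log (r l) / 2 : ℝ))) (fun _ ↦ hunit _) (fun _ ↦ hunit _)
  have hlog := re_sum_mul_le_log_of_norm_expSum_le_one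
    (by rwa [Fintype.sum_prod_type]) himag
    (sum_exp_half_log_mul_norm_le hq hr hqsum hrsum hM)
  rw [sum_half_log_add_half_log_mul_eq hrow hcol, Complex.ofReal_re] at hlog
  linarith

end Quasiprobability

section KirkwoodDirac

variable {𝕜 E F ι κ : Type*} [RCLike 𝕜] [NormedAddCommGroup E] [InnerProductSpace 𝕜 E]
  [NormedAddCommGroup F] [InnerProductSpace 𝕜 F] [Fintype ι] [Fintype κ]

theorem sum_inner_mul_inner_map_left (v : OrthonormalBasis κ 𝕜 E) (T : E →ₗ[𝕜] F) (x : E) (y : F) :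
    ∑ l, ⟪x, v l⟫_𝕜 * ⟪T (v l), y⟫_𝕜 = ⟪T x, y⟫_𝕜 := by
  conv_rhs => rw [← v.sum_repr' x]
  simp [sum_inner, inner_smul_left]

theorem sum_inner_mul_inner_map_right (u : OrthonormalBasis ι 𝕜 E) (T : E →ₗ[𝕜] F) (x : E) (y : F) :
    ∑ k, ⟪u k, x⟫_𝕜 * ⟪y, T (u k)⟫_𝕜 = ⟪y, T x⟫_𝕜 := by
  conv_rhs => rw [← u.sum_repr' x]
  simp [inner_sum, inner_smul_right]

/-- The Kirkwood–Dirac quasiprobability `⟨u k|v l⟩⟨v l|ρ|u k⟩` of the positive operator `ρ = T† T`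
with respect to two orthonormal bases. The operator enters through its factor `T`, so that
`⟨x|ρ|y⟩` is the inner product of `T x` and `T y`. -/
noncomputable def kirkwoodDirac (u : OrthonormalBasis ι 𝕜 E) (v : OrthonormalBasis κ 𝕜 E)
    (T : E →ₗ[𝕜] F) (k : ι) (l : κ) : 𝕜 :=
  ⟪u k, v l⟫_𝕜 * ⟪T (v l), T (u k)⟫_𝕜

variable (u : OrthonormalBasis ι 𝕜 E) (v : OrthonormalBasis κ 𝕜 E) (T : E →ₗ[𝕜] F)

theorem sum_kirkwoodDirac_right (k : ι) :
    ∑ l, kirkwoodDirac u v T k l = ((‖T (u k)‖ ^ 2 : ℝ) : 𝕜) := by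
  simp only [kirkwoodDirac, sum_inner_mul_inner_map_left, inner_self_eq_norm_sq_to_K,
    RCLike.ofReal_pow]

theorem sum_kirkwoodDirac_left (l : κ) :
    ∑ k, kirkwoodDirac u v T k l = ((‖T (v l)‖ ^ 2 : ℝ) : 𝕜) := by
  simp only [kirkwoodDirac, sum_inner_mul_inner_map_right, inner_self_eq_norm_sq_to_K,
    RCLike.ofReal_pow]

theorem sum_sq_norm_map_eq : ∑ k, ‖T (u k)‖ ^ 2 = ∑ l, ‖T (v l)‖ ^ 2 := by
  have hcomm := sum_comm (s := univ) (t := univ) (f := kirkwoodDirac u v T)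
  simp only [sum_kirkwoodDirac_right, sum_kirkwoodDirac_left] at hcomm
  exact_mod_cast hcomm

theorem norm_kirkwoodDirac_le {c : ℝ} {k : ι} {l : κ} (hc : ‖⟪u k, v l⟫_𝕜‖ ≤ c) :
    ‖kirkwoodDirac u v T k l‖ ≤ c * (‖T (u k)‖ * ‖T (v l)‖) := by
  have hc₀ : 0 ≤ c := (norm_nonneg _).trans hc
  rw [kirkwoodDirac, norm_mul, mul_comm ‖T (u k)‖]
  gcongr
  exact norm_inner_le_norm _ _

-- The weights on `κ` are absorbed into `T` by rescaling it along `v`, which does not increase the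
-- Hilbert–Schmidt norm; the double sum becomes a Hilbert–Schmidt inner product.
theorem norm_sum_mul_kirkwoodDirac_le {w : ι → 𝕜} {w' : κ → 𝕜} (hw : ∀ k, ‖w k‖ ≤ 1)
    (hw' : ∀ l, ‖w' l‖ ≤ 1) :
    ‖∑ k, ∑ l, w k * w' l * kirkwoodDirac u v T k l‖ ≤ ∑ k, ‖T (u k)‖ ^ 2 := by
  let S : E →ₗ[𝕜] F := v.toBasis.constr 𝕜 fun l ↦ conj (w' l) • T (v l)
  have hS : ∀ l, S (v l) = conj (w' l) • T (v l) := fun l ↦ by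
    simpa only [v.coe_toBasis] using v.toBasis.constr_basis 𝕜 _ l
  have hS_norm : ∑ k, ‖S (u k)‖ ^ 2 ≤ ∑ k, ‖T (u k)‖ ^ 2 := by
    rw [sum_sq_norm_map_eq u v S, sum_sq_norm_map_eq u v T]
    gcongr with l
    rw [hS, norm_smul, RCLike.norm_conj]
    exact mul_le_of_le_one_left (norm_nonneg _) (hw' l)
  have hinner : ∀ k, ∑ l, w k * w' l * kirkwoodDirac u v T k l = w k * ⟪S (u k), T (u k)⟫_𝕜 := by
    intro k
    rw [← sum_inner_mul_inner_map_left v S, mul_sum]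
    refine sum_congr rfl fun l _ ↦ ?_
    rw [hS, inner_smul_left, RCLike.conj_conj, kirkwoodDirac]
    ring
  calc
    _ ≤ ∑ k, ‖w k * ⟪S (u k), T (u k)⟫_𝕜‖ := by
      simp only [hinner]
      exact norm_sum_le _ _
    _ ≤ ∑ k, ‖S (u k)‖ * ‖T (u k)‖ := by
      gcongr with k
      rw [norm_mul]
      exact (mul_le_of_le_one_left (norm_nonneg _) (hw k)).trans (norm_inner_le_norm _ _)
    _ ≤ √(∑ k, ‖S (u k)‖ ^ 2) * √(∑ k, ‖T (u k)‖ ^ 2) := Real.sum_mul_le_sqrt_mul_sqrt _ _ _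
    _ ≤ √(∑ k, ‖T (u k)‖ ^ 2) * √(∑ k, ‖T (u k)‖ ^ 2) := by gcongr
    _ = ∑ k, ‖T (u k)‖ ^ 2 := Real.mul_self_sqrt (by positivity)

end KirkwoodDirac

section MaassenUffink

theorem maassen_uffink {E F ι κ : Type*} [NormedAddCommGroup E] [InnerProductSpace ℂ E]
    [NormedAddCommGroup F] [InnerProductSpace ℂ F] [Fintype ι] [Fintype κ]
    (u : OrthonormalBasis ι ℂ E) (v : OrthonormalBasis κ ℂ E) (T : E →ₗ[ℂ] F)
    (hT : ∑ k, ‖T (u k)‖ ^ 2 = 1) {c : ℝ} (hc : ∀ k l, ‖⟪u k, v l⟫_ℂ‖ ≤ c) :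
    -2 * Real.log c ≤
      ∑ k, Real.negMulLog (‖T (u k)‖ ^ 2) + ∑ l, Real.negMulLog (‖T (v l)‖ ^ 2) := by
  refine neg_two_mul_log_le_sum_negMulLog_of_marginals (M := kirkwoodDirac u v T)
    (fun _ ↦ by positivity) (fun _ ↦ by positivity) hT (sum_kirkwoodDirac_right u v T)
    (sum_kirkwoodDirac_left u v T) (fun w w' hw hw' ↦ ?_) (fun k l ↦ ?_)
  · exact (norm_sum_mul_kirkwoodDirac_le u v T (fun k ↦ (hw k).le) (fun l ↦ (hw' l).le)).trans_eq hT
  · simpa only [Real.sqrt_sq (norm_nonneg _)] using norm_kirkwoodDirac_le u v T (hc k l)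

variable {𝕜 m n : Type*} [RCLike 𝕜] [Fintype m] [Fintype n] [DecidableEq n]

theorem inner_toEuclideanLin_conjTranspose_mul_self (B : Matrix m n 𝕜) (x : EuclideanSpace 𝕜 n) :
    ⟪x, Matrix.toEuclideanLin (B.conjTranspose * B) x⟫_𝕜 =
      ((‖Matrix.toEuclideanLin B x‖ ^ 2 : ℝ) : 𝕜) := by
  classical
  rw [Matrix.toLpLin_mul_same, LinearMap.comp_apply,
    Matrix.toEuclideanLin_conjTranspose_eq_adjoint, LinearMap.adjoint_inner_right,
    inner_self_eq_norm_sq_to_K, RCLike.ofReal_pow]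

theorem sum_inner_toEuclideanLin_eq_trace {ι : Type*} [Fintype ι]
    (e : OrthonormalBasis ι 𝕜 (EuclideanSpace 𝕜 n)) (A : Matrix n n 𝕜) :
    ∑ k, ⟪e k, Matrix.toEuclideanLin A (e k)⟫_𝕜 = A.trace := by
  rw [← LinearMap.trace_eq_sum_inner, Matrix.toEuclideanLin, Matrix.toLpLin_eq_toLin,
    Matrix.trace_toLin_eq]

open scoped MatrixOrder in
theorem maassen_uffink_of_posSemidef {ι κ : Type*} [Fintype ι] [Fintype κ] {ρ : Matrix n n ℂ}
    (hρ : ρ.PosSemidef) (htr : ρ.trace = 1) (u : OrthonormalBasis ι ℂ (EuclideanSpace ℂ n))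
    (v : OrthonormalBasis κ ℂ (EuclideanSpace ℂ n)) {c : ℝ} (hc : ∀ k l, ‖⟪u k, v l⟫_ℂ‖ ≤ c) :
    -2 * Real.log c ≤ ∑ k, Real.negMulLog (⟪u k, Matrix.toEuclideanLin ρ (u k)⟫_ℂ).re +
      ∑ l, Real.negMulLog (⟪v l, Matrix.toEuclideanLin ρ (v l)⟫_ℂ).re := by
  obtain ⟨B, rfl⟩ := CStarAlgebra.nonneg_iff_eq_star_mul_self.1 hρ.nonneg
  rw [Matrix.star_eq_conjTranspose] at htr ⊢
  have hB : ∑ k, ‖Matrix.toEuclideanLin B (u k)‖ ^ 2 = 1 := by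
    rw [← sum_inner_toEuclideanLin_eq_trace u] at htr
    simp only [inner_toEuclideanLin_conjTranspose_mul_self, RCLike.ofReal_eq_complex_ofReal] at htr
    exact_mod_cast htr
  simpa only [inner_toEuclideanLin_conjTranspose_mul_self, RCLike.ofReal_eq_complex_ofReal,
    Complex.ofReal_re] using maassen_uffink u v (Matrix.toEuclideanLin B) hB hc

end MaassenUffink

theorem shannonEntropy2_eq_sum_div {n : ℕ} (q : Fin n → ℝ) :
    shannonEntropy2 q = (∑ k, Real.negMulLog (q k)) / Real.log 2 :=
  (sum_div _ _ _).symm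

/-- Theorem 2: thermodynamic bound for local-hidden-state models.  The average
assisted erasure cost of any LHS model is lower bounded by the state-independent
complementarity benchmark `−log₂ c` of the two dephasing bases. -/
theorem lhs_erasure_bound
    (d : ℕ) (hd : 1 ≤ d)
    (Λ : Type*) [Fintype Λ]
    (p : Λ → ℝ) (hp : ∀ lam, 0 ≤ p lam) (hpsum : ∑ lam, p lam = 1)
    (ρ : Λ → Matrix (Fin d) (Fin d) ℂ)
    (hρ : ∀ lam, (ρ lam).PosSemidef) (htr : ∀ lam, (ρ lam).trace = 1)
    (u v : OrthonormalBasis (Fin d) ℂ (EuclideanSpace ℂ (Fin d)))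
    (q r : Λ → Fin d → ℝ)
    (hq : ∀ lam k, q lam k = (inner (𝕜 := ℂ) (u k) (Matrix.toEuclideanLin (ρ lam) (u k))).re)
    (hr : ∀ lam l, r lam l = (inner (𝕜 := ℂ) (v l) (Matrix.toEuclideanLin (ρ lam) (v l))).re)
    (c : ℝ)
    (hc : IsGreatest {x : ℝ | ∃ k l, x = ‖(inner (𝕜 := ℂ) (u k) (v l))‖} c) :
    (1 / 2) * ∑ lam, p lam * (shannonEntropy2 (q lam) + shannonEntropy2 (r lam)) ≥
      -Real.logb 2 c := by
  have hstate : ∀ lam, -2 * Real.logb 2 c ≤ shannonEntropy2 (q lam) + shannonEntropy2 (r lam) := by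
    intro lam
    have hnats := maassen_uffink_of_posSemidef (hρ lam) (htr lam) u v fun k l ↦ hc.2 ⟨k, l, rfl⟩
    simp only [← hq, ← hr] at hnats
    rw [shannonEntropy2_eq_sum_div, shannonEntropy2_eq_sum_div, ← add_div, Real.logb,
      ← mul_div_assoc]
    gcongr
  have haverage : -2 * Real.logb 2 c ≤
      ∑ lam, p lam * (shannonEntropy2 (q lam) + shannonEntropy2 (r lam)) :=
    calc
      _ = ∑ lam, p lam * (-2 * Real.logb 2 c) := by rw [← sum_mul, hpsum, one_mul]
      _ ≤ _ := by
        gcongr with lam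
        exacts [hp lam, hstate lam]
  linarith
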